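/- Let T be an ergodic measure-preserving invertible transformation of a probability space and let (s_{n,i})_{(r_n)} be a dynamical sequence of integers that is weak mixing with respect to T. Then (s_{n,i})_{(r_n)} is ergodic with respect to T, i.e., for every measurable set B, ∫ |(1/r_n)∑_{i<r_n} χ_B∘T^{-s_{n,i}} − μ(B)| dμ → 0. -/

import Mathlib

open MeasureTheory Filter Finset

/-- Integer iterate of an invertible transformation. -/
noncomputable def iterZ {X : Type*} [MeasurableSpace X] (T : X ≃ᵐ X) (k : ℤ) : X → X :=
  if 0 ≤ k then (⇑T)^[k.toNat] else (⇑T.symm)^[(-k).toNat]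

section helpers

variable {X : Type*} [MeasurableSpace X]

lemma iterZ_eq (T : X ≃ᵐ X) (k : ℤ) :
    iterZ T k = ⇑((T.toEquiv : Equiv.Perm X) ^ k) := by
  unfold iterZ
  split_ifs with h
  · obtain ⟨n, rfl⟩ := Int.eq_ofNat_of_zero_le h
    simp only [Int.toNat_natCast, zpow_natCast, Equiv.Perm.coe_pow]
    rfl
  · obtain ⟨n, hn⟩ := Int.eq_ofNat_of_zero_le (show 0 ≤ -k by omega)
    obtain rfl : k = -(n : ℤ) := by omega
    simp only [neg_neg, Int.toNat_natCast, zpow_neg, zpow_natCast, ← inv_pow,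
      Equiv.Perm.coe_pow]
    rfl

lemma iterZ_add (T : X ≃ᵐ X) (a b : ℤ) (x : X) :
    iterZ T a (iterZ T b x) = iterZ T (a + b) x := by
  simp only [iterZ_eq, zpow_add, Equiv.Perm.mul_apply]

lemma iterZ_zero (T : X ≃ᵐ X) (x : X) : iterZ T 0 x = x := by
  simp [iterZ_eq]

lemma iterZ_mp (μ : Measure X) (T : X ≃ᵐ X) (hT : MeasurePreserving T μ μ) (k : ℤ) :
    MeasurePreserving (iterZ T k) μ μ := by
  unfold iterZ
  split_ifs with h
  · exact hT.iterate _
  · exact (hT.symm T).iterate _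

lemma iterZ_image (T : X ≃ᵐ X) (k : ℤ) (A : Set X) :
    iterZ T k '' A = iterZ T (-k) ⁻¹' A := by
  refine congrFun (Set.image_eq_preimage_of_inverse ?_ ?_) A
  · intro x; rw [iterZ_add]; simp [iterZ_zero]
  · intro x; rw [iterZ_add]; simp [iterZ_zero]

lemma iterZ_measure (μ : Measure X) (T : X ≃ᵐ X) (hT : MeasurePreserving T μ μ) (k : ℤ)
    {A B : Set X} (hA : MeasurableSet A) (hB : MeasurableSet B) :
    μ (iterZ T k '' A ∩ B) = μ (A ∩ iterZ T k ⁻¹' B) := by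
  rw [← Set.image_inter_preimage, iterZ_image]
  exact (iterZ_mp μ T hT _).measure_preimage
    (hA.inter ((iterZ_mp μ T hT k).measurable hB)).nullMeasurableSet

/-- centered indicator along an iterate -/
noncomputable def hh (μ : Measure X) (T : X ≃ᵐ X) (B : Set X) (k : ℤ) (x : X) : ℝ :=
  B.indicator (fun _ => (1 : ℝ)) (iterZ T k x) - (μ B).toReal

lemma hh_meas (μ : Measure X) (T : X ≃ᵐ X)
    (hT : MeasurePreserving T μ μ) {B : Set X} (hB : MeasurableSet B) (k : ℤ) : Measurable (hh μ T B k) :=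
  ((measurable_const.indicator hB).comp (iterZ_mp μ T hT k).measurable).sub_const _

lemma hh_bound (μ : Measure X) [IsProbabilityMeasure μ] (T : X ≃ᵐ X) {B : Set X} (k : ℤ) (x : X) : |hh μ T B k x| ≤ 1 := by
  have h1 : (μ B).toReal ≤ 1 := measureReal_le_one
  have h0 : 0 ≤ (μ B).toReal := ENNReal.toReal_nonneg
  unfold hh
  by_cases h : iterZ T k x ∈ B
  · simp only [h, Set.indicator_of_mem]; rw [abs_le]; constructor <;> linarith
  · simp only [h, not_false_eq_true, Set.indicator_of_notMem]; rw [abs_le]; constructor <;> linarith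

lemma hh_int (μ : Measure X) [IsProbabilityMeasure μ] (T : X ≃ᵐ X)
    (hT : MeasurePreserving T μ μ) {B : Set X} (hB : MeasurableSet B) (k : ℤ) : Integrable (hh μ T B k) μ :=
  Integrable.of_bound (hh_meas μ T hT hB k).aestronglyMeasurable 1
    (ae_of_all _ fun x => hh_bound μ T k x)

lemma hh_mul_int (μ : Measure X) [IsProbabilityMeasure μ] (T : X ≃ᵐ X)
    (hT : MeasurePreserving T μ μ) {B : Set X} (hB : MeasurableSet B) (a b : ℤ) : Integrable (fun x => hh μ T B a x * hh μ T B b x) μ :=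
  Integrable.of_bound
    ((hh_meas μ T hT hB a).mul (hh_meas μ T hT hB b)).aestronglyMeasurable 1
    (ae_of_all _ fun x => by
      rw [Real.norm_eq_abs, abs_mul]
      exact mul_le_one₀ (hh_bound μ T a x) (abs_nonneg _) (hh_bound μ T b x))

lemma hh_symm (μ : Measure X) [IsProbabilityMeasure μ] (T : X ≃ᵐ X)
    (hT : MeasurePreserving T μ μ) {B : Set X} (hB : MeasurableSet B) (a b : ℤ) :
    ∫ x, hh μ T B a x * hh μ T B b x ∂μ = ∫ x, hh μ T B (-a) x * hh μ T B (-b) x ∂μ := by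
  have hmp := iterZ_mp μ T hT (-a - b)
  have hm : AEStronglyMeasurable (fun x => hh μ T B a x * hh μ T B b x)
      (Measure.map (iterZ T (-a - b)) μ) :=
    ((hh_meas μ T hT hB a).mul (hh_meas μ T hT hB b)).aestronglyMeasurable
  have h := integral_map hmp.measurable.aemeasurable hm
  rw [hmp.map_eq] at h
  rw [h]
  congr 1
  ext x
  simp only [hh, iterZ_add]
  rw [show a + (-a - b) = -b by ring, show b + (-a - b) = -a by ring, mul_comm]

lemma hh_setInt (μ : Measure X) [IsProbabilityMeasure μ] (T : X ≃ᵐ X)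
    (hT : MeasurePreserving T μ μ) {B : Set X} (hB : MeasurableSet B) (k : ℤ) {A : Set X} (hA : MeasurableSet A) :
    ∫ x in A, hh μ T B k x ∂μ =
      (μ (iterZ T k '' A ∩ B)).toReal - (μ A).toReal * (μ B).toReal := by
  have hm : MeasurableSet (iterZ T k ⁻¹' B) := (iterZ_mp μ T hT k).measurable hB
  have e : ∀ x, hh μ T B k x =
      (iterZ T k ⁻¹' B).indicator (fun _ => (1 : ℝ)) x - (μ B).toReal := fun x => rfl
  simp only [e]
  rw [integral_sub ((integrable_const _).indicator hm) (integrable_const _),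
    integral_indicator hm, iterZ_measure μ T hT k hA hB]
  simp [Measure.real, Measure.restrict_apply hm, Set.inter_comm]

lemma avg_bound (μ : Measure X) [IsProbabilityMeasure μ] (T : X ≃ᵐ X) {B : Set X} (r : ℕ) (t : ℕ → ℤ) (x : X) :
    |(1 / (r : ℝ)) * ∑ i ∈ range r, hh μ T B (t i) x| ≤ 1 := by
  rcases Nat.eq_zero_or_pos r with rfl | hr
  · simp
  have hr' : (0 : ℝ) < r := by exact_mod_cast hr
  rw [abs_mul, abs_of_pos (by positivity : 0 < 1 / (r : ℝ)), one_div_mul_eq_div,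
    div_le_one hr']
  refine (Finset.abs_sum_le_sum_abs _ _).trans ?_
  refine (Finset.sum_le_sum fun i _ => hh_bound μ T (t i) x).trans ?_
  simp

lemma avg_meas (μ : Measure X) [IsProbabilityMeasure μ] (T : X ≃ᵐ X)
    (hT : MeasurePreserving T μ μ) {B : Set X} (hB : MeasurableSet B) (r : ℕ) (t : ℕ → ℤ) :
    Measurable fun x => (1 / (r : ℝ)) * ∑ i ∈ range r, hh μ T B (t i) x :=
  (Finset.measurable_fun_sum _ fun i _ => hh_meas μ T hT hB (t i)).const_mul _

lemma avg_int (μ : Measure X) [IsProbabilityMeasure μ] (T : X ≃ᵐ X)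
    (hT : MeasurePreserving T μ μ) {B : Set X} (hB : MeasurableSet B) (r : ℕ) (t : ℕ → ℤ) :
    Integrable (fun x => (1 / (r : ℝ)) * ∑ i ∈ range r, hh μ T B (t i) x) μ :=
  Integrable.of_bound (avg_meas μ T hT hB r t).aestronglyMeasurable 1
    (ae_of_all _ fun x => avg_bound μ T r t x)

lemma avg_sq (μ : Measure X) [IsProbabilityMeasure μ] (T : X ≃ᵐ X)
    (hT : MeasurePreserving T μ μ) {B : Set X} (hB : MeasurableSet B) (r : ℕ) (t : ℕ → ℤ) :
    ∫ x, ((1 / (r : ℝ)) * ∑ i ∈ range r, hh μ T B (-t i) x) ^ 2 ∂μ =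
      ∫ x, ((1 / (r : ℝ)) * ∑ i ∈ range r, hh μ T B (t i) x) ^ 2 ∂μ := by
  have key : ∀ u : ℕ → ℤ,
      ∫ x, ((1 / (r : ℝ)) * ∑ i ∈ range r, hh μ T B (u i) x) ^ 2 ∂μ =
        (1 / (r : ℝ)) ^ 2 *
          ∑ i ∈ range r, ∑ j ∈ range r, ∫ x, hh μ T B (u i) x * hh μ T B (u j) x ∂μ := by
    intro u
    simp only [mul_pow, integral_const_mul]
    congr 1
    simp only [sq, Finset.sum_mul_sum]
    rw [integral_finsetSum _ fun i _ =>
      integrable_finsetSum _ fun j _ => hh_mul_int μ T hT hB (u i) (u j)]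
    refine Finset.sum_congr rfl fun i _ => ?_
    rw [integral_finsetSum _ fun j _ => hh_mul_int μ T hT hB (u i) (u j)]
  rw [key t, key fun i => -t i]
  congr 1
  refine Finset.sum_congr rfl fun i _ => Finset.sum_congr rfl fun j _ => ?_
  exact (hh_symm μ T hT hB (t i) (t j)).symm

lemma avg_setInt (μ : Measure X) [IsProbabilityMeasure μ] (T : X ≃ᵐ X)
    (hT : MeasurePreserving T μ μ) {B : Set X} (hB : MeasurableSet B) (r : ℕ) (t : ℕ → ℤ) {A : Set X} (hA : MeasurableSet A) :
    |∫ x in A, (1 / (r : ℝ)) * ∑ i ∈ range r, hh μ T B (t i) x ∂μ| ≤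
      (1 / (r : ℝ)) * ∑ i ∈ range r,
        |(μ (iterZ T (t i) '' A ∩ B)).toReal - (μ A).toReal * (μ B).toReal| := by
  rw [integral_const_mul, integral_finsetSum _ fun i _ => (hh_int μ T hT hB (t i)).integrableOn,
    abs_mul, abs_of_nonneg (by positivity : 0 ≤ 1 / (r : ℝ))]
  refine mul_le_mul_of_nonneg_left ?_ (by positivity)
  refine (Finset.abs_sum_le_sum_abs _ _).trans (le_of_eq ?_)
  exact Finset.sum_congr rfl fun i _ => by rw [hh_setInt μ T hT hB (t i) hA]

lemma int_abs_le_sqrt (μ : Measure X) [IsProbabilityMeasure μ] {f : X → ℝ} (hf : Measurable f) (hb : ∀ x, |f x| ≤ 1) :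
    ∫ x, |f x| ∂μ ≤ √(∫ x, f x ^ 2 ∂μ) := by
  apply Real.le_sqrt_of_sq_le
  have hi : Integrable (fun x => |f x|) μ :=
    Integrable.of_bound hf.abs.aestronglyMeasurable 1
      (ae_of_all _ fun x => by simpa using hb x)
  have hi2 : Integrable (fun x => f x ^ 2) μ :=
    Integrable.of_bound (hf.pow_const 2).aestronglyMeasurable 1
      (ae_of_all _ fun x => by
        rw [norm_pow]; exact pow_le_one₀ (norm_nonneg _) (hb x))
  set c := ∫ x, |f x| ∂μ with hc
  have h : 0 ≤ ∫ x, (f x ^ 2 - 2 * c * |f x| + c ^ 2) ∂μ :=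
    integral_nonneg fun x => by
      have := sq_nonneg (|f x| - c)
      have h2 := sq_abs (f x)
      simp only [Pi.zero_apply]
      nlinarith
  have hi3 : Integrable (fun x => f x ^ 2 - 2 * c * |f x|) μ := hi2.sub (hi.const_mul _)
  rw [integral_add hi3 (integrable_const _),
    integral_sub hi2 (hi.const_mul _), integral_const_mul, ← hc] at h
  simp at h
  nlinarith

end helpers

/-- A dynamical sequence of integers that is weak mixing with respect to an ergodic
measure-preserving invertible transformation is ergodic (in the L¹ sense) with respect to it. -/
theorem weak_mixing_dynseq_imp_ergodic_dynseq
    {X : Type*} [MeasurableSpace X] (μ : Measure X) [IsProbabilityMeasure μ]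
    (T : X ≃ᵐ X) (hT : MeasurePreserving T μ μ) (hE : Ergodic (⇑T) μ)
    (r : ℕ → ℕ) (hrtop : Tendsto r atTop atTop)
    (s : ℕ → ℕ → ℤ)
    (hwm : ∀ A : ℕ → Set X, (∀ n, MeasurableSet (A n)) → ∀ B : Set X, MeasurableSet B →
      Tendsto (fun n : ℕ =>
          (1 / (r n : ℝ)) * ∑ i ∈ Finset.range (r n),
            |(μ (iterZ T (s n i) '' A n ∩ B)).toReal - (μ (A n)).toReal * (μ B).toReal|)
        atTop (nhds 0)) :
    ∀ B : Set X, MeasurableSet B →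
      Tendsto (fun n : ℕ =>
          ∫ x, |(1 / (r n : ℝ)) * ∑ i ∈ Finset.range (r n),
              B.indicator (fun _ => (1 : ℝ)) (iterZ T (-(s n i)) x) - (μ B).toReal| ∂μ)
        atTop (nhds 0) := by
  intro B hB
  set g : ℕ → X → ℝ := fun n x => (1 / (r n : ℝ)) * ∑ i ∈ range (r n), hh μ T B (s n i) x with hg
  have hgm : ∀ n, Measurable (g n) := fun n => avg_meas μ T hT hB (r n) (s n)
  have hgi : ∀ n, Integrable (g n) μ := fun n => avg_int μ T hT hB (r n) (s n)
  have hgb : ∀ n x, |g n x| ≤ 1 := fun n x => avg_bound μ T (r n) (s n) x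
  set A : ℕ → Set X := fun n => {x | 0 ≤ g n x} with hAdef
  have hA : ∀ n, MeasurableSet (A n) := fun n => measurableSet_le measurable_const (hgm n)
  have hlim := (hwm A hA B hB).add (hwm (fun n => (A n)ᶜ) (fun n => (hA n).compl) B hB)
  rw [add_zero] at hlim
  have hL1 : ∀ n, ∫ x, |g n x| ∂μ = (∫ x in A n, g n x ∂μ) - ∫ x in (A n)ᶜ, g n x ∂μ := by
    intro n
    rw [← integral_add_compl (hA n) (hgi n).abs, sub_eq_add_neg, ← integral_neg]
    congr 1
    · exact setIntegral_congr_fun (hA n) fun x hx => abs_of_nonneg hx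
    · exact setIntegral_congr_fun (hA n).compl fun x hx => abs_of_neg (not_le.mp hx)
  have hL2 : Tendsto (fun n => ∫ x, g n x ^ 2 ∂μ) atTop (nhds 0) := by
    refine squeeze_zero (fun n => integral_nonneg fun x => sq_nonneg _) (fun n => ?_) hlim
    calc ∫ x, g n x ^ 2 ∂μ ≤ ∫ x, |g n x| ∂μ := by
          refine integral_mono_of_nonneg (ae_of_all _ fun x => sq_nonneg _) (hgi n).abs
            (ae_of_all _ fun x => ?_)
          have h1 := hgb n x
          have h2 := sq_abs (g n x)
          have h3 := abs_nonneg (g n x)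
          show g n x ^ 2 ≤ |g n x|
          nlinarith
      _ ≤ _ := by
          rw [hL1]
          have h1 := avg_setInt μ T hT hB (r n) (s n) (hA n)
          have h2 := avg_setInt μ T hT hB (r n) (s n) (hA n).compl
          exact (le_abs_self _).trans ((abs_sub _ _).trans (add_le_add h1 h2))
  have hsq : Tendsto (fun n => √(∫ x, g n x ^ 2 ∂μ)) atTop (nhds 0) := by
    simpa [Function.comp_def] using (Real.continuous_sqrt.tendsto 0).comp hL2
  refine squeeze_zero' (Eventually.of_forall fun n => integral_nonneg fun x => abs_nonneg _)
    ?_ hsq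
  filter_upwards [hrtop.eventually_gt_atTop 0] with n hn
  have hr : (r n : ℝ) ≠ 0 := by exact_mod_cast hn.ne'
  have e : ∀ x, (1 / (r n : ℝ)) * ∑ i ∈ range (r n),
      B.indicator (fun _ => (1 : ℝ)) (iterZ T (-(s n i)) x) - (μ B).toReal =
      (1 / (r n : ℝ)) * ∑ i ∈ range (r n), hh μ T B (-(s n i)) x := by
    intro x
    simp only [hh, Finset.sum_sub_distrib, Finset.sum_const, card_range, nsmul_eq_mul]
    field_simp
  simp only [e]
  rw [hg, ← avg_sq μ T hT hB (r n) (s n)]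
  exact int_abs_le_sqrt μ (avg_meas μ T hT hB (r n) fun i => -(s n i))
    (avg_bound μ T (r n) fun i => -(s n i))
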